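/- Let S be an abelian subgroup of the Pauli group G_d^n with no nontrivial scalars. Then the complex dimension of the fixed subspace Fix(S) satisfies (finrank ℂ Fix(S)) * Nat.card S = d^n; in particular Nat.card S divides d^n and the subspace stabilized by S has dimension d^n / |S|. -/

import Mathlib

/-!
Averaging over the finite group `S` projects onto its fixed subspace, so `dim Fix(S)` is the mean of
the traces of the elements of `S`. Every Pauli matrix that is not a scalar has trace zero: `W(U, V)`
with `V ≠ 0` has zero diagonal, and for `U ≠ 0` the trace of `W(U, 0)` is the sum of a nontrivial
additive character. As the identity is the only scalar in `S`, only its trace `d ^ n` survives.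
-/

open Matrix

noncomputable def q (d : ℕ) : ℂ := Complex.exp (2 * Real.pi * Complex.I / d)

/-- Dot product of two vectors over `ZMod d`. -/
def dotp {n d : ℕ} (A B : Fin n → ZMod d) : ZMod d := ∑ i, A i * B i

/-- The Pauli word `W(U,V)` with entries `q^{⟨U,J⟩}` at `(J, K)` when `J = K + V`. -/
noncomputable def PauliWord (d n : ℕ) (U V : Fin n → ZMod d) :
    Matrix (Fin n → ZMod d) (Fin n → ZMod d) ℂ :=
  Matrix.of fun J K => if J = K + V then q d ^ (dotp U J).val else 0

/-- The n-qudit Pauli group, as a set of matrices. -/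
noncomputable def PauliSet (d n : ℕ) : Set (Matrix (Fin n → ZMod d) (Fin n → ZMod d) ℂ) :=
  {g | ∃ (k : ZMod d) (U V : Fin n → ZMod d), g = q d ^ k.val • PauliWord d n U V}

/-- The subspace of states fixed by every matrix in `S`. -/
noncomputable def FixSubspace (d n : ℕ) [NeZero d]
    (S : Set (Matrix (Fin n → ZMod d) (Fin n → ZMod d) ℂ)) :
    Submodule ℂ ((Fin n → ZMod d) → ℂ) where
  carrier := {ψ | ∀ s ∈ S, s.mulVec ψ = ψ}
  add_mem' := by
    intro a b ha hb s hs
    simp [Matrix.mulVec_add, ha s hs, hb s hs]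
  zero_mem' := by
    intro s hs
    simp [Matrix.mulVec_zero]
  smul_mem' := by
    intro c a ha s hs
    simp [Matrix.mulVec_smul, ha s hs]

theorem finrank_invariants_mul_card_of_character_eq_zero {k G V : Type*} [Field k] [CharZero k]
    [Group G] [Finite G] [AddCommGroup V] [Module k V] [FiniteDimensional k V]
    (ρ : Representation k G V) (hρ : ∀ g ≠ 1, ρ.character g = 0) :
    Module.finrank k ρ.invariants * Nat.card G = Module.finrank k V := by
  have := Fintype.ofFinite G
  have hG : (Nat.card G : k) ≠ 0 := Nat.cast_ne_zero.2 Nat.card_pos.ne'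
  have := invertibleOfNonzero hG
  have hmean := ρ.card_inv_mul_sum_char_eq_finrank
  rw [Fintype.sum_eq_single 1 hρ, ρ.char_one, inv_mul_eq_iff_eq_mul₀ hG, mul_comm] at hmean
  exact_mod_cast hmean.symm

theorem sum_addChar_dotProduct_eq_zero {ι R R' : Type*} [Fintype ι] [DecidableEq ι] [CommRing R]
    [Fintype R] [CommRing R'] [IsDomain R'] {ψ : AddChar R R'} (hψ : ψ.IsPrimitive)
    {u : ι → R} (hu : u ≠ 0) :
    ∑ x : ι → R, ψ (u ⬝ᵥ x) = 0 := by
  let χ : AddChar (ι → R) R' := ψ.compAddMonoidHom (dotProductEquiv R ι u).toAddMonoidHom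
  obtain ⟨i, hi⟩ := Function.ne_iff.1 hu
  obtain ⟨r, hr⟩ := AddChar.ne_one_iff.1 (hψ hi)
  have hχ : χ ≠ 1 := AddChar.ne_one_iff.2 ⟨Pi.single i r, by simpa [χ] using hr⟩
  exact AddChar.sum_eq_zero_of_ne_one hχ

section Pauli

variable {d n : ℕ}

theorem pauliWord_zero_zero : PauliWord d n 0 0 = 1 := by
  ext J K
  simp [PauliWord, dotp, Matrix.one_apply]

variable [NeZero d]

theorem q_pow_val (a : ZMod d) : q d ^ a.val = ZMod.stdAddChar a := by
  rw [q, ← Complex.exp_nat_mul, ZMod.stdAddChar_apply, ZMod.toCircle_apply]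
  congr 1
  ring

theorem trace_pauliWord_eq_zero {U V : Fin n → ZMod d} (h : U ≠ 0 ∨ V ≠ 0) :
    (PauliWord d n U V).trace = 0 := by
  by_cases hV : V = 0
  · have hU : U ≠ 0 := h.resolve_right (not_not.2 hV)
    calc (PauliWord d n U V).trace
        = ∑ J, ZMod.stdAddChar (U ⬝ᵥ J) := by
          simp [Matrix.trace, PauliWord, hV, q_pow_val, dotp, dotProduct]
      _ = 0 := sum_addChar_dotProduct_eq_zero (ZMod.isPrimitive_stdAddChar d) hU
  · simp [Matrix.trace, PauliWord, hV]

theorem trace_eq_zero_of_mem_pauliSet {g : Matrix (Fin n → ZMod d) (Fin n → ZMod d) ℂ}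
    (hg : g ∈ PauliSet d n) (hscalar : ∀ c : ℂ, g ≠ c • 1) : g.trace = 0 := by
  obtain ⟨k, U, V, rfl⟩ := hg
  have hUV : U ≠ 0 ∨ V ≠ 0 := by
    by_contra! h
    exact hscalar (q d ^ k.val) (by rw [h.1, h.2, pauliWord_zero_zero])
  rw [Matrix.trace_smul, trace_pauliWord_eq_zero hUV, smul_zero]

theorem finite_pauliSet : (PauliSet d n).Finite := by
  refine (Set.finite_range fun p : ZMod d × (Fin n → ZMod d) × (Fin n → ZMod d) =>
    q d ^ p.1.val • PauliWord d n p.2.1 p.2.2).subset ?_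
  rintro _ ⟨k, U, V, rfl⟩
  exact ⟨(k, U, V), rfl⟩

end Pauli

theorem finrank_fixSubspace_mul_card (d n : ℕ) [NeZero d] (hd : 2 ≤ d) (hn : 1 ≤ n)
    (S : Set (Matrix (Fin n → ZMod d) (Fin n → ZMod d) ℂ))
    (hSsub : S ⊆ PauliSet d n)
    (hS1 : (1 : Matrix (Fin n → ZMod d) (Fin n → ZMod d) ℂ) ∈ S)
    (hSmul : ∀ a ∈ S, ∀ b ∈ S, a * b ∈ S)
    (hSinv : ∀ a ∈ S, ∃ b ∈ S, a * b = 1)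
    (hScomm : ∀ a ∈ S, ∀ b ∈ S, a * b = b * a)
    (hSscal : ∀ c : ℂ, c • (1 : Matrix (Fin n → ZMod d) (Fin n → ZMod d) ℂ) ∈ S →
      c • (1 : Matrix (Fin n → ZMod d) (Fin n → ZMod d) ℂ) = 1) :
    Module.finrank ℂ (FixSubspace d n S) * Nat.card S = d ^ n ∧
    Nat.card S ∣ d ^ n ∧
    Module.finrank ℂ (FixSubspace d n S) = d ^ n / Nat.card S := by
  let G : Submonoid (Matrix (Fin n → ZMod d) (Fin n → ZMod d) ℂ) :=
    { carrier := S, one_mem' := hS1, mul_mem' := fun ha hb => hSmul _ ha _ hb }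
  have hunit (a : G) : IsUnit a := by
    obtain ⟨b, hb, hab⟩ := hSinv a a.2
    exact ⟨⟨a, ⟨b, hb⟩, Subtype.ext hab, Subtype.ext ((hScomm b hb a a.2).trans hab)⟩, rfl⟩
  let _ : Group G := groupOfIsUnit hunit
  have : Finite G := finite_pauliSet.subset hSsub
  let ρ : Representation ℂ G ((Fin n → ZMod d) → ℂ) :=
    (Matrix.toLinAlgEquiv' : _ ≃ₐ[ℂ] _).toMonoidHom.comp G.subtype
  have hfix : FixSubspace d n S = ρ.invariants :=
    Submodule.ext fun ψ => ⟨fun h a => h a a.2, fun h a ha => h ⟨a, ha⟩⟩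
  have hchar (a : G) (ha : a ≠ 1) : ρ.character a = 0 := by
    refine (Matrix.trace_toLin'_eq a.1).trans (trace_eq_zero_of_mem_pauliSet (hSsub a.2) ?_)
    exact fun c hc => ha (Subtype.ext (hc.trans (hSscal c (hc ▸ a.2))))
  have hmul : Module.finrank ℂ (FixSubspace d n S) * Nat.card S = d ^ n := by
    rw [hfix]
    exact (finrank_invariants_mul_card_of_character_eq_zero ρ hchar).trans (by simp)
  exact ⟨hmul, Dvd.intro_left _ hmul, Nat.eq_div_of_mul_eq_left Nat.card_pos.ne' hmul⟩
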